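/- The series ∑_{n=0}^∞ ζ(2n)/((2n+3)·16^n) equals -(1/4)·log 2 + 9ζ(3)/(8π²) - 3G/π + 24β(4)/π³, where β is the Dirichlet beta function. -/

import Mathlib

open Real

noncomputable def dirichletBeta (s : ℕ) : ℝ := ∑' n : ℕ, (-1) ^ n / (2 * (n : ℝ) + 1) ^ s

noncomputable def catalanConst : ℝ := ∑' n : ℕ, (-1) ^ n / (2 * (n : ℝ) + 1) ^ 2

open Filter Topology

lemma zeta_succ_eq (n : ℕ) (hn : 1 < n) :
    riemannZeta n = ∑' k : ℕ, 1 / ((k : ℂ) + 1) ^ n := by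
  rw [zeta_nat_eq_tsum_of_gt_one hn, Summable.tsum_eq_zero_add]
  · simp [show n ≠ 0 by omega]
  · have := Real.summable_one_div_nat_pow.mpr hn
    have h2 := Complex.ofRealCLM.summable this
    simpa using h2

lemma summ_inv_sq : Summable (fun k : ℕ => 1 / ((k : ℝ) + 1) ^ 2) := by
  have := (summable_nat_add_iff 1).mpr (Real.summable_one_div_nat_pow.mpr (one_lt_two))
  simpa using this

lemma summ_inv_pow (n : ℕ) (hn : 1 < n) : Summable (fun k : ℕ => 1 / ((k : ℝ) + 1) ^ n) := by
  have := (summable_nat_add_iff 1).mpr (Real.summable_one_div_nat_pow.mpr hn)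
  simpa using this

/-- a uniform bound for the even zeta values -/
lemma zeta_bound : ∃ C : ℝ, 0 ≤ C ∧ ∀ n : ℕ, ‖riemannZeta (2 * n)‖ ≤ C := by
  refine ⟨1 + ∑' k : ℕ, 1 / ((k : ℝ) + 1) ^ 2, by positivity, fun n => ?_⟩
  have h0 : 0 ≤ ∑' k : ℕ, 1 / ((k : ℝ) + 1) ^ 2 := by positivity
  rcases Nat.eq_zero_or_pos n with rfl | hn
  · simp only [Nat.cast_zero, mul_zero, riemannZeta_zero]
    norm_num
    simp only [one_div] at h0
    linarith
  · have := zeta_succ_eq (2 * n) (by omega)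
    push_cast at this
    rw [this]
    refine (tsum_of_norm_bounded summ_inv_sq.hasSum fun k => ?_).trans (by linarith)
    have : ‖(k : ℂ) + 1‖ = (k : ℝ) + 1 := by
      exact_mod_cast Complex.norm_natCast (k + 1)
    rw [norm_div, norm_one, norm_pow, this]
    apply one_div_le_one_div_of_le (by positivity)
    exact pow_le_pow_right₀ (by linarith [(Nat.cast_nonneg k : (0:ℝ) ≤ k)]) (by omega)

lemma geo_term (z : ℂ) (hz : z ∈ Complex.integerComplement) (h1 : ‖z‖ < 1) (k : ℕ) :
    ∑' n : ℕ, ((z / ((k : ℂ) + 1)) ^ 2) ^ (n + 1) =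
      -(z / 2) * (1 / (z - (k + 1)) + 1 / (z + (k + 1))) := by
  have e : ‖(k : ℂ) + 1‖ = (k : ℝ) + 1 := by
    exact_mod_cast Complex.norm_natCast (k + 1)
  have hk : (k : ℂ) + 1 ≠ 0 := by exact_mod_cast Nat.succ_ne_zero k
  have hp : (0:ℝ) ≤ k := Nat.cast_nonneg _
  have hn : ‖(z / ((k : ℂ) + 1)) ^ 2‖ < 1 := by
    rw [norm_pow, norm_div, e]
    have : ‖z‖ / ((k : ℝ) + 1) ≤ ‖z‖ := div_le_self (norm_nonneg _) (by linarith)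
    have h0 : 0 ≤ ‖z‖ / ((k : ℝ) + 1) := by positivity
    nlinarith
  have a1 : z - (k + 1) ≠ 0 := by
    intro h; apply hz; exact ⟨k + 1, by push_cast; linear_combination -h⟩
  have a2 : z + (k + 1) ≠ 0 := by
    intro h; apply hz; exact ⟨-(k + 1), by push_cast; linear_combination -h⟩
  have hq := tsum_geometric_of_norm_lt_one hn
  have a3 : 1 - (z / ((k : ℂ) + 1)) ^ 2 = -((z - (k + 1)) * (z + (k + 1))) / (k + 1) ^ 2 := by
    field_simp; ring
  have hsplit : ∀ w : ℂ, ∑' n : ℕ, w ^ (n + 1) = w * ∑' n : ℕ, w ^ n := by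
    intro w
    rw [← tsum_mul_left]
    exact tsum_congr fun n => pow_succ' w n
  rw [hsplit, hq, a3]
  field_simp
  ring

lemma geo_summ (z : ℂ) (h1 : ‖z‖ < 1) :
    Summable (fun p : ℕ × ℕ => ((z / ((p.2 : ℂ) + 1)) ^ 2) ^ (p.1 + 1)) := by
  have hlt : ‖z‖ ^ 2 < 1 := by nlinarith [norm_nonneg z]
  have hg : Summable (fun p : ℕ × ℕ => (‖z‖ ^ 2) ^ p.1 * (1 / ((p.2 : ℝ) + 1) ^ 2)) := by
    apply Summable.mul_of_nonneg (summable_geometric_of_lt_one (by positivity) hlt) summ_inv_sq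
    · intro n; exact pow_nonneg (pow_nonneg (norm_nonneg z) 2) n
    · intro n; exact div_nonneg zero_le_one (sq_nonneg _)
  refine Summable.of_norm_bounded hg fun p => ?_
  have e : ‖(p.2 : ℂ) + 1‖ = (p.2 : ℝ) + 1 := by
    exact_mod_cast Complex.norm_natCast (p.2 + 1)
  rw [norm_pow, norm_pow, norm_div, e, pow_succ]
  have hp : (0:ℝ) ≤ p.2 := Nat.cast_nonneg _
  have hd : ‖z‖ / ((p.2 : ℝ) + 1) ≤ ‖z‖ := div_le_self (norm_nonneg _) (by linarith)
  have hd2 : ‖z‖ / ((p.2 : ℝ) + 1) ≤ 1 / ((p.2 : ℝ) + 1) := by gcongr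
  rw [← one_div_pow]
  gcongr

lemma zeta_gen (z : ℂ) (hz : z ∈ Complex.integerComplement) (h1 : ‖z‖ < 1) :
    ∑' n : ℕ, riemannZeta (2 * n) * z ^ (2 * n) = -(z / 2) * (π * Complex.cot (π * z)) := by
  obtain ⟨C, hC, hb⟩ := zeta_bound
  have hz0 : z ≠ 0 := by
    rintro rfl
    apply hz
    exact ⟨0, by simp⟩
  have hs : Summable (fun n : ℕ => riemannZeta (2 * n) * z ^ (2 * n)) := by
    refine Summable.of_norm_bounded (g := fun n => C * (‖z‖ ^ 2) ^ n) ?_ fun n => ?_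
    · exact (summable_geometric_of_lt_one (by positivity) (by nlinarith [norm_nonneg z])).mul_left C
    · rw [norm_mul, norm_pow, pow_mul]
      gcongr
      exact hb n
  rw [hs.tsum_eq_zero_add]
  have hterm : ∀ n : ℕ, riemannZeta (2 * (n + 1 : ℕ)) * z ^ (2 * (n + 1)) =
      ∑' k : ℕ, ((z / (k + 1)) ^ 2) ^ (n + 1) := by
    intro n
    have := zeta_succ_eq (2 * (n + 1)) (by omega)
    push_cast at this ⊢
    rw [this, ← tsum_mul_right]
    congr 1; ext k
    rw [← pow_mul, div_pow]; ring
  simp_rw [hterm]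
  have hsum := geo_summ z h1
  have hcomm : ∑' (n : ℕ) (k : ℕ), ((z / ((k : ℂ) + 1)) ^ 2) ^ (n + 1) =
      ∑' (k : ℕ) (n : ℕ), ((z / ((k : ℂ) + 1)) ^ 2) ^ (n + 1) :=
    (Summable.tsum_comm (f := fun n k : ℕ => ((z / ((k : ℂ) + 1)) ^ 2) ^ (n + 1)) hsum).symm
  rw [hcomm, tsum_congr (fun k => geo_term z hz h1 k), tsum_mul_left]
  have hcot := cot_series_rep' hz
  have : (π * Complex.cot (π * z)) = 1 / z + ∑' n : ℕ, (1 / (z - (n + 1)) + 1 / (z + (n + 1))) := by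
    rw [← hcot]; ring
  rw [this, mul_add]
  congr 1
  simp only [Nat.cast_zero, mul_zero, riemannZeta_zero, pow_zero]
  field_simp

noncomputable def polyL (s : ℕ) (z : ℂ) : ℂ :=
  ∑' k : ℕ, Complex.exp (2 * π * Complex.I * z) ^ (k + 1) / ((k : ℂ) + 1) ^ s

lemma norm_q (z : ℂ) : ‖Complex.exp (2 * π * Complex.I * z)‖ = Real.exp (-(2 * π * z.im)) := by
  rw [Complex.norm_exp]; simp

lemma norm_k (k : ℕ) : ‖(k : ℂ) + 1‖ = (k : ℝ) + 1 := by
  exact_mod_cast Complex.norm_natCast (k + 1)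

lemma term_le (s : ℕ) (z : ℂ) (k : ℕ) (r : ℝ) (hr : Real.exp (-(2 * π * z.im)) ≤ r) :
    ‖Complex.exp (2 * π * Complex.I * z) ^ (k + 1) / ((k : ℂ) + 1) ^ s‖ ≤ r ^ (k + 1) := by
  rw [norm_div, norm_pow, norm_pow, norm_k, norm_q]
  have h1 : (1 : ℝ) ≤ ((k : ℝ) + 1) ^ s := one_le_pow₀ (by linarith [(Nat.cast_nonneg k : (0:ℝ) ≤ k)])
  refine (div_le_self (by positivity) h1).trans ?_
  gcongr

lemma summ_geo {r : ℝ} (h0 : 0 ≤ r) (h1 : r < 1) : Summable (fun k : ℕ => r ^ (k + 1)) :=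
  (summable_nat_add_iff 1).mpr (summable_geometric_of_lt_one h0 h1)

lemma polyL_summable (s : ℕ) (z : ℂ) (hz : 0 < z.im) : Summable (fun k : ℕ =>
    Complex.exp (2 * π * Complex.I * z) ^ (k + 1) / ((k : ℂ) + 1) ^ s) := by
  refine Summable.of_norm_bounded (summ_geo (Real.exp_pos (-(2 * π * z.im))).le ?_)
    fun k => term_le s z k _ le_rfl
  rw [Real.exp_lt_one_iff]
  have := Real.pi_pos
  have : 0 < 2 * π * z.im := by positivity
  linarith

lemma polyL_deriv (s : ℕ) (z : ℂ) (hz : 0 < z.im) :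
    HasDerivAt (polyL (s + 1)) (2 * π * Complex.I * polyL s z) z := by
  set t : Set ℂ := {w | z.im / 2 < w.im} with ht
  have hopen : IsOpen t := isOpen_lt continuous_const Complex.continuous_im
  have hconv : IsPreconnected t := (convex_halfSpace_im_gt (z.im / 2)).isPreconnected
  have hzt : z ∈ t := by simp only [ht, Set.mem_ofPred_eq]; linarith
  have hpi := Real.pi_pos
  have hr : Real.exp (-(2 * π * (z.im / 2))) < 1 := by
    rw [Real.exp_lt_one_iff]
    have : 0 < 2 * π * (z.im / 2) := by positivity
    linarith
  have key := hasDerivAt_tsum_of_isPreconnected (𝕜 := ℂ) (F := ℂ)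
    (g := fun (k : ℕ) w => Complex.exp (2 * π * Complex.I * w) ^ (k + 1) / ((k : ℂ) + 1) ^ (s + 1))
    (g' := fun (k : ℕ) w => 2 * π * Complex.I *
      (Complex.exp (2 * π * Complex.I * w) ^ (k + 1) / ((k : ℂ) + 1) ^ s))
    (u := fun k : ℕ => 2 * π * Real.exp (-(2 * π * (z.im / 2))) ^ (k + 1))
    (t := t) (y₀ := z) (y := z)
    ((summ_geo (Real.exp_pos _).le hr).mul_left _) hopen hconv ?_ ?_ hzt
    (polyL_summable (s + 1) z hz) hzt
  · rw [tsum_mul_left] at key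
    exact key
  · intro k y _
    have hk : (k : ℂ) + 1 ≠ 0 := by exact_mod_cast Nat.succ_ne_zero k
    have h1 : HasDerivAt (fun w : ℂ => 2 * π * Complex.I * w) (2 * π * Complex.I) y := by
      simpa using (hasDerivAt_id y).const_mul (2 * π * Complex.I)
    have h2 := ((h1.cexp).pow (k + 1)).div_const (((k : ℂ) + 1) ^ (s + 1))
    refine h2.congr_deriv ?_
    push_cast
    field_simp
    ring
  · intro k y hy
    have hc : ‖(2 * π * Complex.I : ℂ)‖ = 2 * π := by
      simp [abs_of_pos hpi]
    rw [norm_mul, hc]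
    gcongr
    refine term_le s y k _ ?_
    have : z.im / 2 < y.im := hy
    gcongr

lemma polyL_cont (s : ℕ) (hs : 1 < s) : ContinuousOn (polyL s) {z | 0 ≤ z.im} := by
  refine continuousOn_tsum (u := fun k : ℕ => 1 / ((k : ℝ) + 1) ^ s) ?_ (summ_inv_pow s hs) ?_
  · intro k
    fun_prop
  · intro k z hz
    rw [norm_div, norm_pow, norm_pow, norm_k, norm_q]
    have hpi := Real.pi_pos
    have hz' : 0 ≤ z.im := hz
    have : Real.exp (-(2 * π * z.im)) ≤ 1 := by
      rw [Real.exp_le_one_iff]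
      have : 0 ≤ 2 * π * z.im := by positivity
      linarith
    gcongr
    exact pow_le_one₀ (Real.exp_pos _).le this

lemma q_lt (z : ℂ) (hz : 0 < z.im) : ‖Complex.exp (2 * π * Complex.I * z)‖ < 1 := by
  rw [norm_q, Real.exp_lt_one_iff]
  have hpi := Real.pi_pos
  have : 0 < 2 * π * z.im := by positivity
  linarith

lemma polyL_one (z : ℂ) (hz : 0 < z.im) :
    polyL 1 z = -Complex.log (1 - Complex.exp (2 * π * Complex.I * z)) := by
  rw [← (Complex.hasSum_taylorSeries_neg_log' (q_lt z hz)).tsum_eq]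
  simp [polyL]

lemma polyL_zero (z : ℂ) (hz : 0 < z.im) :
    ∑' n : ℕ, Complex.exp (2 * π * Complex.I * z) ^ n = 1 + polyL 0 z := by
  rw [(summable_geometric_of_norm_lt_one (q_lt z hz)).tsum_eq_zero_add]
  simp [polyL]

noncomputable def serP (z : ℂ) : ℂ := ∑' n : ℕ, riemannZeta (2 * n) * z ^ (2 * n + 3) / (2 * n + 3)

lemma serP_deriv (z : ℂ) (hz : ‖z‖ < 1 / 2) :
    HasDerivAt serP (∑' n : ℕ, riemannZeta (2 * n) * z ^ (2 * n + 2)) z := by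
  obtain ⟨C, hC, hb⟩ := zeta_bound
  refine hasDerivAt_tsum_of_isPreconnected (𝕜 := ℂ) (F := ℂ)
    (g := fun (n : ℕ) w => riemannZeta (2 * n) * w ^ (2 * n + 3) / (2 * n + 3))
    (g' := fun (n : ℕ) w => riemannZeta (2 * n) * w ^ (2 * n + 2))
    (u := fun n : ℕ => C * (1 / 2) ^ n) (t := Metric.ball 0 (1 / 2)) (y₀ := 0) (y := z)
    ((summable_geometric_of_lt_one (by norm_num) (by norm_num)).mul_left _) Metric.isOpen_ball
    (convex_ball _ _).isPreconnected ?_ ?_ (by simp) ?_ (by simpa using hz)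
  · intro n y _
    have hn : (2 * (n : ℂ) + 3) ≠ 0 := by exact_mod_cast (by omega : 2 * n + 3 ≠ 0)
    have h := ((hasDerivAt_pow (2 * n + 3) y).const_mul (riemannZeta (2 * n))).div_const
      (2 * (n : ℂ) + 3)
    refine h.congr_deriv ?_
    push_cast
    field_simp
  · intro n y hy
    have hy' : ‖y‖ ≤ 1 / 2 := by
      have : ‖y‖ < 1 / 2 := by simpa using hy
      exact this.le
    rw [norm_mul, norm_pow]
    gcongr
    · exact hb n
    · calc ‖y‖ ^ (2 * n + 2) ≤ (1 / 2) ^ (2 * n + 2) := by gcongr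
        _ ≤ (1 / 2) ^ n := pow_le_pow_of_le_one (by norm_num) (by norm_num) (by omega)
  · simp

noncomputable def antiG (z : ℂ) : ℂ :=
  π * Complex.I * z ^ 4 / 8 + 1 / 2 * (z ^ 3 * polyL 1 z - 3 * z ^ 2 * polyL 2 z / (2 * π * Complex.I)
    + 6 * z * polyL 3 z / (2 * π * Complex.I) ^ 2 - 6 * polyL 4 z / (2 * π * Complex.I) ^ 3)

lemma antiG_deriv (z : ℂ) (hz : 0 < z.im) :
    HasDerivAt antiG (π * Complex.I * z ^ 3 / 2 + 1 / 2 * z ^ 3 * (2 * π * Complex.I * polyL 0 z)) z := by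
  have d1 := polyL_deriv 0 z hz
  have d2 := polyL_deriv 1 z hz
  have d3 := polyL_deriv 2 z hz
  have d4 := polyL_deriv 3 z hz
  have hc : (2 * π * Complex.I : ℂ) ≠ 0 := Complex.two_pi_I_ne_zero
  have hd := (((hasDerivAt_pow 4 z).const_mul (π * Complex.I : ℂ)).div_const 8).add
    ((((((hasDerivAt_pow 3 z).mul d1).sub
      ((((hasDerivAt_pow 2 z).const_mul 3).mul d2).div_const (2 * π * Complex.I))).add
      ((((hasDerivAt_id z).const_mul 6).mul d3).div_const ((2 * π * Complex.I) ^ 2))).sub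
      ((d4.const_mul 6).div_const ((2 * π * Complex.I) ^ 3))).const_mul (1 / 2 : ℂ))
  refine hd.congr_deriv ?_
  simp only [id]
  generalize (2 * π * Complex.I : ℂ) = c at *
  push_cast
  field_simp
  ring

lemma diff_hasDeriv (z : ℂ) (hz : 0 < z.im) (h1 : ‖z‖ < 1 / 2) :
    HasDerivAt (fun w => serP w - antiG w) 0 z := by
  have h := (serP_deriv z h1).sub (antiG_deriv z hz)
  refine h.congr_deriv ?_
  have e : ∑' n : ℕ, riemannZeta (2 * n) * z ^ (2 * n + 2) =
      (∑' n : ℕ, riemannZeta (2 * n) * z ^ (2 * n)) * z ^ 2 := by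
    rw [← tsum_mul_right]
    exact tsum_congr fun n => by ring
  have hcomp := UpperHalfPlane.coe_mem_integerComplement ⟨z, hz⟩
  have hq := pi_mul_cot_pi_q_exp ⟨z, hz⟩
  simp only at hq
  rw [e, zeta_gen z hcomp (by linarith), hq, polyL_zero z hz]
  ring

lemma diff_const (z w : ℂ) (hz : 0 < z.im) (h1 : ‖z‖ < 1 / 2) (hw : 0 < w.im) (h2 : ‖w‖ < 1 / 2) :
    serP z - antiG z = serP w - antiG w := by
  have hU : IsOpen ({z : ℂ | 0 < z.im} ∩ Metric.ball 0 (1 / 2)) :=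
    (isOpen_lt continuous_const Complex.continuous_im).inter Metric.isOpen_ball
  have hconv : IsPreconnected ({z : ℂ | 0 < z.im} ∩ Metric.ball 0 (1 / 2)) :=
    ((convex_halfSpace_im_gt 0).inter (convex_ball _ _)).isPreconnected
  have hd : ∀ x ∈ ({z : ℂ | 0 < z.im} ∩ Metric.ball 0 (1 / 2)),
      HasDerivAt (fun w => serP w - antiG w) 0 x := fun x hx =>
    diff_hasDeriv x hx.1 (by simpa using hx.2)
  exact hU.is_const_of_deriv_eq_zero hconv
    (fun x hx => (hd x hx).differentiableAt.differentiableWithinAt)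
    (fun x hx => (hd x hx).deriv) ⟨hz, by simpa using h1⟩ ⟨hw, by simpa using h2⟩

lemma path_im (a ε : ℝ) : ((a : ℂ) + ε * Complex.I).im = ε := by simp

lemma path_tendsto (a : ℝ) :
    Tendsto (fun ε : ℝ => (a : ℂ) + ε * Complex.I) (𝓝[>] 0) (𝓝 (a : ℂ)) := by
  have : Continuous (fun ε : ℝ => (a : ℂ) + ε * Complex.I) := by fun_prop
  have h := this.tendsto 0
  simp only [Complex.ofReal_zero, zero_mul, add_zero] at h
  exact h.mono_left nhdsWithin_le_nhds

lemma polyL_tendsto (s : ℕ) (hs : 1 < s) (a : ℝ) :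
    Tendsto (fun ε : ℝ => polyL s ((a : ℂ) + ε * Complex.I)) (𝓝[>] 0) (𝓝 (polyL s a)) := by
  have hc := polyL_cont s hs (a : ℂ) (by simp)
  refine hc.tendsto.comp (tendsto_nhdsWithin_iff.mpr ⟨path_tendsto a, ?_⟩)
  filter_upwards [self_mem_nhdsWithin] with ε hε
  have : 0 < ε := hε
  simpa using this.le

lemma q_quarter : Complex.exp (2 * π * Complex.I * ((1 / 4 : ℝ) : ℂ)) = Complex.I := by
  have h : (2 * π * Complex.I * ((1 / 4 : ℝ) : ℂ)) = π / 2 * Complex.I := by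
    push_cast
    ring
  rw [h, Complex.exp_pi_div_two_mul_I]

lemma polyL_one_quarter_tendsto :
    Tendsto (fun ε : ℝ => polyL 1 (((1 / 4 : ℝ) : ℂ) + ε * Complex.I)) (𝓝[>] 0)
      (𝓝 (-Complex.log (1 - Complex.I))) := by
  have hc : ContinuousAt (fun z : ℂ => -Complex.log (1 - Complex.exp (2 * π * Complex.I * z)))
      ((1 / 4 : ℝ) : ℂ) := by
    refine ContinuousAt.neg (ContinuousAt.clog (by fun_prop) ?_)
    rw [q_quarter]
    left
    simp
  have h := hc.tendsto.comp (path_tendsto (1 / 4))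
  rw [q_quarter] at h
  refine h.congr' ?_
  filter_upwards [self_mem_nhdsWithin] with ε hε
  have hε' : 0 < ε := hε
  exact (polyL_one _ (by rw [path_im]; exact hε')).symm

lemma polyL_one_bound (ε : ℝ) (hε : 0 < ε) :
    ‖polyL 1 (((0 : ℝ) : ℂ) + ε * Complex.I)‖ ≤ 1 / (2 * π * ε) := by
  have hpi := Real.pi_pos
  have hpos : 0 < 2 * π * ε := by positivity
  set r := Real.exp (-(2 * π * ε)) with hr
  have hr0 : 0 < r := Real.exp_pos _
  have hr1 : r < 1 := by rw [hr, Real.exp_lt_one_iff]; linarith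
  have hs : HasSum (fun k : ℕ => r ^ (k + 1)) (r * (1 - r)⁻¹) := by
    simpa only [pow_succ'] using (hasSum_geometric_of_lt_one hr0.le hr1).mul_left r
  refine (tsum_of_norm_bounded hs fun k => term_le 1 _ k r (by rw [path_im])).trans ?_
  have h1 : 2 * π * ε + 1 ≤ Real.exp (2 * π * ε) := Real.add_one_le_exp _
  have h2 : r * Real.exp (2 * π * ε) = 1 := by
    rw [hr, ← Real.exp_add]; simp
  rw [← div_eq_mul_inv, div_le_div_iff₀ (by linarith) hpos]
  nlinarith

lemma cube_polyL_tendsto :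
    Tendsto (fun ε : ℝ => (((0 : ℝ) : ℂ) + ε * Complex.I) ^ 3 *
      polyL 1 (((0 : ℝ) : ℂ) + ε * Complex.I)) (𝓝[>] 0) (𝓝 0) := by
  have hpi := Real.pi_pos
  have hlim : Tendsto (fun ε : ℝ => ε ^ 2 / (2 * π)) (𝓝[>] 0) (𝓝 0) := by
    have : Continuous (fun ε : ℝ => ε ^ 2 / (2 * π)) := by fun_prop
    have h := this.tendsto 0
    simp only [ne_eq, OfNat.ofNat_ne_zero, not_false_eq_true, zero_pow, zero_div] at h
    exact h.mono_left nhdsWithin_le_nhds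
  refine squeeze_zero_norm' ?_ hlim
  filter_upwards [self_mem_nhdsWithin] with ε hε
  have hε' : 0 < ε := hε
  have hn : ‖((0 : ℝ) : ℂ) + ε * Complex.I‖ = ε := by simp [abs_of_pos hε']
  rw [norm_mul, norm_pow, hn]
  calc ε ^ 3 * ‖polyL 1 (((0 : ℝ) : ℂ) + ε * Complex.I)‖ ≤ ε ^ 3 * (1 / (2 * π * ε)) := by
        gcongr; exact polyL_one_bound ε hε'
    _ = ε ^ 2 / (2 * π) := by field_simp

lemma antiG_tendsto (a : ℝ) (l : ℂ) (hl : Tendsto (fun ε : ℝ => ((a : ℂ) + ε * Complex.I) ^ 3 *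
      polyL 1 ((a : ℂ) + ε * Complex.I)) (𝓝[>] 0) (𝓝 l)) :
    Tendsto (fun ε : ℝ => antiG ((a : ℂ) + ε * Complex.I)) (𝓝[>] 0)
      (𝓝 (π * Complex.I * (a : ℂ) ^ 4 / 8 + 1 / 2 * (l - 3 * (a : ℂ) ^ 2 * polyL 2 a / (2 * π * Complex.I)
    + 6 * (a : ℂ) * polyL 3 a / (2 * π * Complex.I) ^ 2 - 6 * polyL 4 a / (2 * π * Complex.I) ^ 3))) := by
  have p := path_tendsto a
  have p2 := polyL_tendsto 2 (by norm_num) a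
  have p3 := polyL_tendsto 3 (by norm_num) a
  have p4 := polyL_tendsto 4 (by norm_num) a
  exact (((p.pow 4).const_mul _).div_const _).add
    ((((hl.sub ((((p.pow 2).const_mul _).mul p2).div_const _)).add
      (((p.const_mul _).mul p3).div_const _)).sub ((p4.const_mul _).div_const _)).const_mul _)

lemma serP_tendsto (a : ℝ) (ha : |a| < 1 / 2) :
    Tendsto (fun ε : ℝ => serP ((a : ℂ) + ε * Complex.I)) (𝓝[>] 0) (𝓝 (serP a)) :=
  (serP_deriv (a : ℂ) (by simpa using ha)).continuousAt.tendsto.comp (path_tendsto a)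

lemma path_small (a : ℝ) (ha : |a| < 1 / 2) :
    ∀ᶠ ε : ℝ in 𝓝[>] 0, ‖(a : ℂ) + ε * Complex.I‖ < 1 / 2 :=
  (path_tendsto a).norm.eventually_lt_const (by simpa using ha)

lemma serP_quarter : serP ((1 / 4 : ℝ) : ℂ) =
    π * Complex.I * ((1 / 4 : ℝ) : ℂ) ^ 4 / 8 + 1 / 2 * (((1 / 4 : ℝ) : ℂ) ^ 3 * (-Complex.log (1 - Complex.I))
      - 3 * ((1 / 4 : ℝ) : ℂ) ^ 2 * polyL 2 ((1 / 4 : ℝ) : ℂ) / (2 * π * Complex.I)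
      + 6 * ((1 / 4 : ℝ) : ℂ) * polyL 3 ((1 / 4 : ℝ) : ℂ) / (2 * π * Complex.I) ^ 2
      - 6 * polyL 4 ((1 / 4 : ℝ) : ℂ) / (2 * π * Complex.I) ^ 3)
    + 3 * polyL 4 ((0 : ℝ) : ℂ) / (2 * π * Complex.I) ^ 3 := by
  have hq : |(1 / 4 : ℝ)| < 1 / 2 := by rw [abs_of_pos] <;> norm_num
  have h0 : |(0 : ℝ)| < 1 / 2 := by simp
  have t1 := (serP_tendsto (1 / 4) hq).sub (antiG_tendsto (1 / 4) _
    (((path_tendsto (1 / 4)).pow 3).mul polyL_one_quarter_tendsto))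
  have t0 := (serP_tendsto 0 h0).sub (antiG_tendsto 0 _ cube_polyL_tendsto)
  have hEq : (fun ε : ℝ => serP (((1 / 4 : ℝ) : ℂ) + ε * Complex.I) -
      antiG (((1 / 4 : ℝ) : ℂ) + ε * Complex.I)) =ᶠ[𝓝[>] 0]
      (fun ε : ℝ => serP (((0 : ℝ) : ℂ) + ε * Complex.I) - antiG (((0 : ℝ) : ℂ) + ε * Complex.I)) := by
    filter_upwards [self_mem_nhdsWithin, path_small _ hq, path_small _ h0] with ε hε h1 h2
    have hε' : 0 < ε := hε
    exact diff_const _ _ (by rw [path_im]; exact hε') h1 (by rw [path_im]; exact hε') h2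
  have hu := tendsto_nhds_unique (t1.congr' hEq) t0
  have hs0 : serP ((0 : ℝ) : ℂ) = 0 := by simp [serP]
  rw [hs0, sub_eq_iff_eq_add] at hu
  rw [hu]
  simp only [Complex.ofReal_zero]
  ring

lemma polyL_quarter (s : ℕ) (hs : 1 < s) : polyL s ((1 / 4 : ℝ) : ℂ) =
    Complex.I * (dirichletBeta s : ℂ) - ((∑' m : ℕ, (-1 : ℝ) ^ m / (2 * (m : ℝ) + 2) ^ s : ℝ) : ℂ) := by
  rw [polyL, q_quarter]
  have hsum : Summable (fun k : ℕ => Complex.I ^ (k + 1) / ((k : ℂ) + 1) ^ s) := by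
    refine Summable.of_norm_bounded (summ_inv_pow s hs) fun k => ?_
    rw [norm_div, norm_pow, norm_pow, norm_k]
    simp
  have he : Summable (fun m : ℕ => Complex.I ^ (2 * m + 1) / (((2 * m : ℕ) : ℂ) + 1) ^ s) :=
    hsum.comp_injective (mul_right_injective₀ (two_ne_zero' ℕ))
  have ho : Summable (fun m : ℕ => Complex.I ^ (2 * m + 1 + 1) / (((2 * m + 1 : ℕ) : ℂ) + 1) ^ s) :=
    hsum.comp_injective ((add_left_injective 1).comp (mul_right_injective₀ (two_ne_zero' ℕ)))
  rw [← tsum_even_add_odd (f := fun k : ℕ => Complex.I ^ (k + 1) / ((k : ℂ) + 1) ^ s) he ho,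
    dirichletBeta, Complex.ofReal_tsum, Complex.ofReal_tsum, ← tsum_mul_left, sub_eq_add_neg,
    ← tsum_neg]
  congr 1
  · refine tsum_congr fun m => ?_
    push_cast
    rw [pow_succ, pow_mul, Complex.I_sq]
    ring
  · refine tsum_congr fun m => ?_
    push_cast
    rw [pow_succ, pow_succ, pow_mul, Complex.I_sq, mul_assoc, Complex.I_mul_I]
    ring

lemma eta_three : ∑' m : ℕ, (-1 : ℝ) ^ m / (2 * (m : ℝ) + 2) ^ 3 =
    3 / 32 * ∑' k : ℕ, 1 / ((k : ℝ) + 1) ^ 3 := by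
  have hS := summ_inv_pow 3 (by norm_num)
  have hA : Summable (fun m : ℕ => 1 / (((2 * m : ℕ) : ℝ) + 1) ^ 3) :=
    hS.comp_injective (mul_right_injective₀ (two_ne_zero' ℕ))
  have hB : Summable (fun m : ℕ => 1 / (((2 * m + 1 : ℕ) : ℝ) + 1) ^ 3) :=
    hS.comp_injective ((add_left_injective 1).comp (mul_right_injective₀ (two_ne_zero' ℕ)))
  have hZ := tsum_even_add_odd (f := fun k : ℕ => 1 / ((k : ℝ) + 1) ^ 3) hA hB
  have hB8 : ∑' m : ℕ, 1 / (((2 * m + 1 : ℕ) : ℝ) + 1) ^ 3 =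
      1 / 8 * ∑' k : ℕ, 1 / ((k : ℝ) + 1) ^ 3 := by
    rw [← tsum_mul_left]
    refine tsum_congr fun m => ?_
    push_cast
    field_simp
    ring
  have hA' : Summable (fun m : ℕ => (-1 : ℝ) ^ (2 * m) / (((2 * m : ℕ) : ℝ) + 1) ^ 3) := by
    refine hA.congr fun m => ?_
    simp
  have hB' : Summable (fun m : ℕ => (-1 : ℝ) ^ (2 * m + 1) / (((2 * m + 1 : ℕ) : ℝ) + 1) ^ 3) := by
    refine hB.neg.congr fun m => ?_
    rw [pow_succ (-1 : ℝ), pow_mul]; simp [neg_div]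
  have hE := tsum_even_add_odd (f := fun k : ℕ => (-1 : ℝ) ^ k / ((k : ℝ) + 1) ^ 3) hA' hB'
  have e1 : ∑' m : ℕ, (-1 : ℝ) ^ (2 * m) / (((2 * m : ℕ) : ℝ) + 1) ^ 3 =
      ∑' m : ℕ, 1 / (((2 * m : ℕ) : ℝ) + 1) ^ 3 := tsum_congr fun m => by simp
  have e2 : ∑' m : ℕ, (-1 : ℝ) ^ (2 * m + 1) / (((2 * m + 1 : ℕ) : ℝ) + 1) ^ 3 =
      - ∑' m : ℕ, 1 / (((2 * m + 1 : ℕ) : ℝ) + 1) ^ 3 := by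
    rw [← tsum_neg]
    exact tsum_congr fun m => by rw [pow_succ (-1 : ℝ), pow_mul]; simp [neg_div]
  have e3 : ∑' m : ℕ, (-1 : ℝ) ^ m / (2 * (m : ℝ) + 2) ^ 3 =
      1 / 8 * ∑' k : ℕ, (-1 : ℝ) ^ k / ((k : ℝ) + 1) ^ 3 := by
    rw [← tsum_mul_left]
    refine tsum_congr fun m => ?_
    rw [show 2 * (m : ℝ) + 2 = 2 * (m + 1) by ring, mul_pow]
    field_simp
    norm_num
  rw [e3, ← hE, e1, e2]
  linarith

lemma zeta_real (n : ℕ) (hn : 1 < n) :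
    riemannZeta n = ((∑' k : ℕ, 1 / ((k : ℝ) + 1) ^ n : ℝ) : ℂ) := by
  rw [zeta_succ_eq n hn, Complex.ofReal_tsum]
  exact tsum_congr fun k => by push_cast; ring

lemma polyL_at_zero : polyL 4 ((0 : ℝ) : ℂ) = ((∑' k : ℕ, 1 / ((k : ℝ) + 1) ^ 4 : ℝ) : ℂ) := by
  rw [polyL, Complex.ofReal_tsum]
  exact tsum_congr fun k => by simp

lemma log_one_sub_I : Complex.log (1 - Complex.I) =
    ((Real.log 2 / 2 : ℝ) : ℂ) + Complex.I * (Complex.arg (1 - Complex.I) : ℂ) := by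
  rw [Complex.log]
  have : ‖1 - Complex.I‖ = √2 := by
    rw [Complex.norm_def, Complex.normSq_apply]
    norm_num
  rw [this, Real.log_sqrt (by norm_num)]
  ring

lemma serP_real : (serP ((1 / 4 : ℝ) : ℂ)).im = 0 := by
  rw [← Complex.conj_eq_iff_im, serP, Complex.conj_tsum]
  refine tsum_congr fun n => ?_
  have h2 : (starRingEnd ℂ) (2 : ℂ) = 2 := Complex.conj_ofNat 2
  have h3 : (starRingEnd ℂ) (3 : ℂ) = 3 := Complex.conj_ofNat 3
  rw [map_div₀, map_mul, ← riemannZeta_conj, map_pow, Complex.conj_ofReal, map_add, map_mul, h2, h3,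
    Complex.conj_natCast]

theorem stmt6 :
    ∑' n : ℕ, riemannZeta (2 * n) / ((2 * n + 3) * 16 ^ n) =
      -(1 / 4) * (Real.log 2 : ℂ) + 9 * riemannZeta 3 / (8 * (π : ℂ) ^ 2) -
        3 * (catalanConst : ℂ) / (π : ℂ) + 24 * (dirichletBeta 4 : ℂ) / (π : ℂ) ^ 3 := by
  have hS : ∑' n : ℕ, riemannZeta (2 * n) / ((2 * n + 3) * 16 ^ n) =
      64 * serP ((1 / 4 : ℝ) : ℂ) := by
    rw [serP, ← tsum_mul_left]
    refine tsum_congr fun n => ?_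
    have hn : (2 * (n : ℂ) + 3) ≠ 0 := by exact_mod_cast (by omega : 2 * n + 3 ≠ 0)
    rw [pow_add, pow_mul, show (((1 / 4 : ℝ) : ℂ)) ^ 2 = 1 / 16 by norm_num, one_div_pow,
      show (((1 / 4 : ℝ) : ℂ)) ^ 3 = 1 / 64 by norm_num]
    field_simp
  have hcat : catalanConst = dirichletBeta 2 := rfl
  have hz3 : riemannZeta 3 = ((∑' k : ℕ, 1 / ((k : ℝ) + 1) ^ 3 : ℝ) : ℂ) := by
    exact_mod_cast zeta_real 3 (by norm_num)
  have hP := serP_quarter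
  rw [polyL_quarter 2 (by norm_num), polyL_quarter 3 (by norm_num), polyL_quarter 4 (by norm_num),
    polyL_at_zero, eta_three, log_one_sub_I] at hP
  have him := serP_real
  rw [hS, hz3, hcat]
  generalize (∑' k : ℕ, 1 / ((k : ℝ) + 1) ^ 3) = Z at *
  generalize (∑' k : ℕ, 1 / ((k : ℝ) + 1) ^ 4) = Y at *
  generalize (∑' m : ℕ, (-1 : ℝ) ^ m / (2 * (m : ℝ) + 2) ^ 2) = X2 at *
  generalize (∑' m : ℕ, (-1 : ℝ) ^ m / (2 * (m : ℝ) + 2) ^ 4) = X4 at *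
  generalize Complex.arg (1 - Complex.I) = θ at *
  generalize serP ((1 / 4 : ℝ) : ℂ) = S at *
  have hpi : (π : ℂ) ≠ 0 := by exact_mod_cast Real.pi_ne_zero
  have hpr : π ≠ 0 := Real.pi_ne_zero
  have key : 64 * S = ((-(1 / 4) * Real.log 2 + 9 * Z / (8 * π ^ 2) - 3 * dirichletBeta 2 / π
      + 24 * dirichletBeta 4 / π ^ 3 : ℝ) : ℂ) +
      ((π / 32 - θ / 2 - 3 * X2 / π - 12 * dirichletBeta 3 / π ^ 2 + 24 * X4 / π ^ 3
        + 24 * Y / π ^ 3 : ℝ) : ℂ) * Complex.I := by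
    rw [hP]
    have hI3 : Complex.I ^ 3 = -Complex.I := Complex.I_pow_three
    push_cast
    simp only [mul_pow, Complex.I_sq, hI3]
    field_simp
    ring_nf
    simp only [Complex.I_sq, hI3, Complex.I_pow_four]
    ring_nf
  generalize (π / 32 - θ / 2 - 3 * X2 / π - 12 * dirichletBeta 3 / π ^ 2 + 24 * X4 / π ^ 3
        + 24 * Y / π ^ 3 : ℝ) = y at key
  have hy : y = 0 := by
    have h64 : (64 * S).im = 0 := by simp [him]
    rw [key] at h64
    simpa only [Complex.add_im, Complex.mul_im, Complex.ofReal_im, Complex.ofReal_re, Complex.I_re,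
      Complex.I_im, mul_one, mul_zero, add_zero, zero_add] using h64
  rw [key, hy]
  push_cast
  ring
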